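/- arXiv:1906.04785 — 4 statements merged into one kernel-verified Lean document; each statement's English description precedes it below -/
import Mathlib

section
/- Let μ ∈ ℝ and σ > 0, and let X be a random variable with X ~ N(μ, σ²). Then for every differentiable function g : ℝ → ℝ such that E|g'(X)|, E|X g(X)| and E|g(X)| are all finite, one has E[σ² g'(X) − (X − μ) g(X)] = 0. -/
open MeasureTheory ProbabilityTheory

/-!
The density `φ` of `N(μ, v)` satisfies `v φ' = -(x - μ) φ`, so that
`(v φ g)' = φ (v g' - (x - μ) g)`. The right-hand side is the Stein integrand against Lebesgue
measure, and an integrable derivative of an integrable function has integral zero. Integrability of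
`φ g` comes for free: it is clear near `μ`, and away from `μ` it follows from that of
`φ (x - μ) g`.
-/

open Filter Asymptotics
open scoped NNReal

theorem integrable_of_integrable_sub_smul {𝕜 E : Type*} [NormedField 𝕜] [ProperSpace 𝕜]
    [MeasurableSpace 𝕜] [OpensMeasurableSpace 𝕜] [NormedAddCommGroup E] [NormedSpace 𝕜 E]
    {ν : Measure 𝕜} {g : 𝕜 → E} {a : 𝕜} (hg : LocallyIntegrable g ν)
    (hag : Integrable (fun x ↦ (x - a) • g x) ν) : Integrable g ν := by
  have one_le_dist : ∀ᶠ x in cocompact 𝕜, 1 ≤ dist x a :=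
    (tendsto_dist_right_cocompact_atTop a).eventually_ge_atTop 1
  have isBigO_sub_smul : g =O[cocompact 𝕜] fun x ↦ (x - a) • g x := by
    refine IsBigO.of_bound' (one_le_dist.mono fun x hx ↦ ?_)
    rw [norm_smul, ← dist_eq_norm]
    exact le_mul_of_one_le_left (norm_nonneg _) hx
  exact hg.integrable_of_isBigO_cocompact isBigO_sub_smul (hag.integrableAtFilter _)

theorem hasDerivAt_gaussianPDFReal (μ : ℝ) (v : ℝ≥0) (x : ℝ) :
    HasDerivAt (gaussianPDFReal μ v) (-((x - μ) / v) * gaussianPDFReal μ v x) x := by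
  have hasDerivAt_exponent :
      HasDerivAt (fun y : ℝ ↦ -(y - μ) ^ 2 / (2 * v)) (-((x - μ) / v)) x := by
    refine ((((hasDerivAt_id x).sub_const μ).pow 2).neg.div_const (2 * (v : ℝ))).congr_deriv ?_
    simp only [id, Nat.cast_ofNat, Nat.add_one_sub_one, pow_one, mul_one, neg_div]
    rw [mul_div_mul_left _ _ two_ne_zero]
  rw [gaussianPDFReal_def]
  exact (hasDerivAt_exponent.exp.const_mul _).congr_deriv (by ring)

section NormedSpace

variable {E : Type*} [NormedAddCommGroup E] [NormedSpace ℝ E] {μ : ℝ} {v : ℝ≥0}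

theorem integrable_gaussianReal_iff_integrable_smul (hv : v ≠ 0) {f : ℝ → E} :
    Integrable f (gaussianReal μ v) ↔ Integrable (fun x ↦ gaussianPDFReal μ v x • f x) := by
  rw [gaussianReal_of_var_ne_zero μ hv, integrable_withDensity_iff_integrable_smul'
    (measurable_gaussianPDF μ v) (ae_of_all _ fun _ ↦ gaussianPDF_lt_top)]
  simp only [toReal_gaussianPDF]

theorem hasDerivAt_smul_gaussianPDFReal_smul (hv : v ≠ 0) {g : ℝ → E} {g' : E} {x : ℝ}
    (hg : HasDerivAt g g' x) :
    HasDerivAt (fun y ↦ (v : ℝ) • gaussianPDFReal μ v y • g y)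
      (gaussianPDFReal μ v x • ((v : ℝ) • g' - (x - μ) • g x)) x := by
  have hv' : (v : ℝ) ≠ 0 := NNReal.coe_ne_zero.2 hv
  refine (((hasDerivAt_gaussianPDFReal μ v x).smul hg).const_smul (v : ℝ)).congr_deriv ?_
  match_scalars <;> field_simp

variable [CompleteSpace E]

theorem integral_gaussianReal_smul_deriv_sub_smul_eq_zero {g g' : ℝ → E}
    (hg : ∀ x, HasDerivAt g (g' x) x) (hg' : Integrable g' (gaussianReal μ v))
    (hμg : Integrable (fun x ↦ (x - μ) • g x) (gaussianReal μ v)) :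
    ∫ x, ((v : ℝ) • g' x - (x - μ) • g x) ∂gaussianReal μ v = 0 := by
  rcases eq_or_ne v 0 with rfl | hv
  · rw [gaussianReal_zero_var, integral_dirac]
    simp
  have continuous_g : Continuous g := continuous_iff_continuousAt.2 fun x ↦ (hg x).continuousAt
  have integrable_g : Integrable g (gaussianReal μ v) :=
    integrable_of_integrable_sub_smul continuous_g.locallyIntegrable hμg
  rw [integral_gaussianReal_eq_integral_smul hv]
  exact integral_eq_zero_of_hasDerivAt_of_integrable
    (fun x ↦ hasDerivAt_smul_gaussianPDFReal_smul hv (hg x))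
    ((integrable_gaussianReal_iff_integrable_smul hv).1 ((hg'.smul (v : ℝ)).sub hμg))
    (((integrable_gaussianReal_iff_integrable_smul hv).1 integrable_g).smul (v : ℝ))

theorem stein_characterisation_normal_necessity_general
    {Ω : Type*} [MeasurableSpace Ω] {P : Measure Ω} {X : Ω → ℝ}
    (hX : HasLaw X (gaussianReal μ v) P) {g : ℝ → E} (hg : Differentiable ℝ g)
    (hg' : Integrable (fun ω ↦ deriv g (X ω)) P)
    (hμg : Integrable (fun ω ↦ (X ω - μ) • g (X ω)) P) :
    ∫ ω, ((v : ℝ) • deriv g (X ω) - (X ω - μ) • g (X ω)) ∂P = 0 := by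
  have integrable_of_comp {f : ℝ → E} (hf : StronglyMeasurable f)
      (hfX : Integrable (fun ω ↦ f (X ω)) P) : Integrable f (gaussianReal μ v) := by
    rw [← hX.map_eq]
    exact (integrable_map_measure hf.aestronglyMeasurable hX.aemeasurable).2 hfX
  have hderiv : StronglyMeasurable (deriv g) := stronglyMeasurable_deriv g
  have hsmul : StronglyMeasurable fun x ↦ (x - μ) • g x :=
    ((continuous_id.sub continuous_const).smul hg.continuous).stronglyMeasurable
  calc ∫ ω, ((v : ℝ) • deriv g (X ω) - (X ω - μ) • g (X ω)) ∂P
    _ = ∫ x, ((v : ℝ) • deriv g x - (x - μ) • g x) ∂gaussianReal μ v :=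
      hX.integral_comp ((hderiv.const_smul (v : ℝ)).sub hsmul).aestronglyMeasurable
    _ = 0 := integral_gaussianReal_smul_deriv_sub_smul_eq_zero (fun x ↦ (hg x).hasDerivAt)
      (integrable_of_comp hderiv hg') (integrable_of_comp hsmul hμg)

end NormedSpace

/-- Necessity direction of the Stein characterisation of the normal distribution:
if `X ~ N(μ, σ²)` then `E[σ² g'(X) − (X − μ) g(X)] = 0` for all differentiable `g`
with `E|g'(X)|`, `E|X g(X)|` and `E|g(X)|` finite. -/
theorem stein_characterisation_normal_necessity
    {Ω : Type*} [MeasurableSpace Ω] (P : Measure Ω) [IsProbabilityMeasure P]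
    (μ σ : ℝ) (hσ : 0 < σ) (X : Ω → ℝ) (hX : Measurable X)
    (hlaw : P.map X = gaussianReal μ ⟨σ ^ 2, sq_nonneg σ⟩)
    (g : ℝ → ℝ) (hg : Differentiable ℝ g)
    (h1 : Integrable (fun ω => deriv g (X ω)) P)
    (h2 : Integrable (fun ω => X ω * g (X ω)) P)
    (h3 : Integrable (fun ω => g (X ω)) P) :
    ∫ ω, (σ ^ 2 * deriv g (X ω) - (X ω - μ) * g (X ω)) ∂P = 0 :=
  stein_characterisation_normal_necessity_general ⟨hX.aemeasurable, hlaw⟩ hg h1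
    (by simpa only [smul_eq_mul, sub_mul, Pi.sub_def] using h2.sub (h3.const_mul μ))
end

section
/- Let ρ ∈ (−1, 1) and n ≥ 1. Then the function x ↦ |x|^{(n−1)/2} exp(ρ n x/(1 − ρ²)) I_{(n−1)/2}(n|x|/(1 − ρ²)), defined for x ≠ 0, is not Lebesgue integrable on ℝ, where I_ν(y) = Σ_{k=0}^∞ (y/2)^{2k+ν}/(k! Γ(k + ν + 1)). -/
open MeasureTheory

/-- The modified Bessel function of the first kind,
`I_ν(y) = Σ_{k=0}^∞ (y/2)^{2k+ν}/(k! Γ(k + ν + 1))`. -/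
noncomputable def besselI (ν y : ℝ) : ℝ :=
  ∑' k : ℕ, (y / 2) ^ (2 * (k : ℝ) + ν) / ((k.factorial : ℝ) * Real.Gamma ((k : ℝ) + ν + 1))

/-!
All terms of the series of `I_ν` are positive for `ν > -1`, so `I_ν` dominates each of its terms and
hence grows faster than any power. On the half-line where the exponential factor is at least one,
the product therefore tends to infinity, whatever the power of `|x|`, whereas an integrable function
exceeds a given positive level only on a set of finite measure.
-/

open Filter Topology

lemma not_integrable_of_eventually_le_norm {α E : Type*} [MeasurableSpace α] {μ : Measure α}
    [NormedAddCommGroup E] {f : α → E} {l : Filter α} {ε : ℝ}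
    (hl : ∀ s ∈ l, μ s = ⊤) (hε : 0 < ε) (hf : ∀ᶠ x in l, ε ≤ ‖f x‖) : ¬ Integrable f μ :=
  fun hint => (hint.measure_norm_ge_lt_top hε).ne (hl _ hf)

lemma volume_eq_top_of_mem_atTop {s : Set ℝ} (hs : s ∈ atTop) : volume s = ⊤ := by
  obtain ⟨a, ha⟩ := mem_atTop_sets.1 hs
  exact measure_mono_top ha Real.volume_Ici

/-- The `k`-th term of the power series defining `besselI ν y`. -/
noncomputable def besselITerm (ν y : ℝ) (k : ℕ) : ℝ :=
  (y / 2) ^ (2 * (k : ℝ) + ν) / ((k.factorial : ℝ) * Real.Gamma ((k : ℝ) + ν + 1))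

section BesselI

variable {ν y : ℝ}

lemma besselITerm_pos (hν : -1 < ν) (hy : 0 < y) (k : ℕ) : 0 < besselITerm ν y k := by
  have hΓ : 0 < Real.Gamma (k + ν + 1) :=
    Real.Gamma_pos_of_pos (by linarith [k.cast_nonneg (α := ℝ)])
  unfold besselITerm
  positivity

lemma besselITerm_succ (hy : 0 < y) {k : ℕ} (hk : (k : ℝ) + ν + 1 ≠ 0) :
    besselITerm ν y (k + 1) =
      (y / 2) ^ 2 / ((k + 1) * (k + ν + 1)) * besselITerm ν y k := by
  have hpow : (y / 2) ^ (2 * ((k + 1 : ℕ) : ℝ) + ν) =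
      (y / 2) ^ 2 * (y / 2) ^ (2 * (k : ℝ) + ν) := by
    rw [← Real.rpow_two, ← Real.rpow_add (by positivity)]
    push_cast
    ring_nf
  have hΓ : Real.Gamma (((k + 1 : ℕ) : ℝ) + ν + 1) = (k + ν + 1) * Real.Gamma (k + ν + 1) := by
    rw [← Real.Gamma_add_one hk]
    push_cast
    ring_nf
  unfold besselITerm
  rw [hpow, hΓ, Nat.factorial_succ, div_mul_div_comm]
  push_cast
  ring_nf

lemma summable_besselITerm (ν : ℝ) (hy : 0 < y) : Summable (besselITerm ν y) := by
  have hshift (c : ℝ) : Tendsto (fun k : ℕ => (k : ℝ) + c) atTop atTop :=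
    tendsto_atTop_add_const_right _ c tendsto_natCast_atTop_atTop
  have hratio : Tendsto (fun k : ℕ => (y / 2) ^ 2 / (((k : ℝ) + 1) * (k + (ν + 1))))
      atTop (𝓝 0) :=
    ((hshift 1).atTop_mul_atTop₀ (hshift (ν + 1))).const_div_atTop _
  refine summable_of_ratio_norm_eventually_le (r := 1 / 2) (by norm_num) ?_
  filter_upwards [hratio.norm.eventually_le_const (by norm_num : ‖(0 : ℝ)‖ < 1 / 2),
    (hshift (ν + 1)).eventually_ne_atTop 0] with k hk hne
  rw [← add_assoc] at hk hne
  rw [besselITerm_succ hy hne, norm_mul]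
  gcongr

lemma besselITerm_le_besselI (hν : -1 < ν) (hy : 0 < y) (k : ℕ) :
    besselITerm ν y k ≤ besselI ν y :=
  (summable_besselITerm ν hy).le_tsum k fun j _ => (besselITerm_pos hν hy j).le

lemma tendsto_rpow_mul_besselI_atTop (hν : -1 < ν) (p : ℝ) :
    Tendsto (fun y => y ^ p * besselI ν y) atTop atTop := by
  obtain ⟨k, hk⟩ := exists_nat_gt (-(p + ν))
  have hexp : 0 < p + (2 * k + ν) := by linarith [k.cast_nonneg (α := ℝ)]
  have hterm {y : ℝ} (hy : 0 < y) :
      y ^ (p + (2 * k + ν)) * besselITerm ν 1 k = y ^ p * besselITerm ν y k := by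
    unfold besselITerm
    rw [Real.rpow_add hy, div_eq_mul_one_div y, Real.mul_rpow hy.le (by norm_num)]
    ring
  refine tendsto_atTop_mono' _ ?_
    ((tendsto_rpow_atTop hexp).atTop_mul_const (besselITerm_pos hν one_pos k))
  filter_upwards [eventually_gt_atTop 0] with y hy
  rw [hterm hy]
  gcongr
  exact besselITerm_le_besselI hν hy k

lemma tendsto_rpow_mul_besselI_const_mul_atTop (hν : -1 < ν) (p : ℝ) {b : ℝ} (hb : 0 < b) :
    Tendsto (fun x => x ^ p * besselI ν (b * x)) atTop atTop := by
  have hscaled : Tendsto (fun x => b ^ (-p) * ((b * x) ^ p * besselI ν (b * x))) atTop atTop :=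
    ((tendsto_rpow_mul_besselI_atTop hν p).comp
      (tendsto_id.const_mul_atTop hb)).const_mul_atTop (by positivity)
  refine hscaled.congr' ?_
  filter_upwards [eventually_ge_atTop 0] with x hx
  rw [← mul_assoc, Real.mul_rpow hb.le hx, ← mul_assoc, ← Real.rpow_add hb, neg_add_cancel,
    Real.rpow_zero, one_mul]

theorem besselI_solution_not_integrable_general (hν : -1 < ν) (p a : ℝ) {b : ℝ} (hb : 0 < b) :
    ¬ Integrable (fun x : ℝ => |x| ^ p * Real.exp (a * x) * besselI ν (b * |x|)) volume := by
  wlog ha : 0 ≤ a generalizing a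
  · intro hint
    refine this (-a) (by linarith) ?_
    simpa only [abs_neg, mul_neg, neg_mul] using hint.comp_neg
  refine not_integrable_of_eventually_le_norm (fun _ => volume_eq_top_of_mem_atTop) one_pos ?_
  filter_upwards [(tendsto_rpow_mul_besselI_const_mul_atTop hν p hb).eventually_ge_atTop 1,
    eventually_ge_atTop 0] with x hgrowth hx
  have hexp : 1 ≤ Real.exp (a * x) := Real.one_le_exp (by positivity)
  rw [abs_of_nonneg hx, mul_right_comm]
  exact (one_le_mul_of_one_le_of_one_le hgrowth hexp).trans (Real.le_norm_self _)

end BesselI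

/-- The function `x ↦ |x|^{(n−1)/2} e^{ρnx/(1−ρ²)} I_{(n−1)/2}(n|x|/(1−ρ²))` is not Lebesgue
integrable on `ℝ`, so the `I`-Bessel solution of the density ODE cannot contribute to a
probability density function. -/
theorem besselI_solution_not_integrable
    (ρ : ℝ) (hρ : ρ ∈ Set.Ioo (-1 : ℝ) 1) (n : ℕ) (hn : 1 ≤ n) :
    ¬ Integrable (fun x : ℝ =>
        |x| ^ (((n : ℝ) - 1) / 2) * Real.exp (ρ * n * x / (1 - ρ ^ 2)) *
          besselI (((n : ℝ) - 1) / 2) (n * |x| / (1 - ρ ^ 2))) volume := by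
  have hn₁ : (1 : ℝ) ≤ n := by exact_mod_cast hn
  have hden : 0 < 1 - ρ ^ 2 := by nlinarith [hρ.1, hρ.2]
  have hν : -1 < ((n : ℝ) - 1) / 2 := by linarith
  have hb : 0 < n / (1 - ρ ^ 2) := by positivity
  have hgeneral :=
    besselI_solution_not_integrable_general hν (((n : ℝ) - 1) / 2) (ρ * n / (1 - ρ ^ 2)) hb
  simpa only [div_mul_eq_mul_div] using hgeneral
end

section
/- Let ν > −1/2 and −1 < β < 1. Then ∫_{−∞}^{∞} e^{βx} |x|^ν K_ν(|x|) dx = √π Γ(ν + 1/2) 2^ν / (1 − β²)^{ν + 1/2}, where K_ν(y) = ∫₀^∞ e^{−y cosh t} cosh(νt) dt for y > 0, and Γ is the Gamma function. -/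
open MeasureTheory

/-- The modified Bessel function of the second kind,
`K_ν(y) = ∫₀^∞ e^{−y cosh t} cosh(νt) dt`. -/
noncomputable def besselK (ν y : ℝ) : ℝ :=
  ∫ t in Set.Ioi (0 : ℝ), Real.exp (-(y * Real.cosh t)) * Real.cosh (ν * t)

/-!
For `x > 0` the substitution `v = (x / 2) eᵗ` turns the defining integral of `K_ν` into
`x ^ ν K_ν(x) = 2 ^ (ν - 1) ∫₀^∞ v ^ (ν - 1) e^{-v - x² / (4v)} dv`, a Gamma mixture of Gaussians
in `x`. After exchanging the integrals, the integral over `x` is the exponential moment of a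
Gaussian of variance `2v`, equal to `2 √(πv) e^{β² v}`, and what is left is the Gamma integral
`∫₀^∞ v ^ (ν - 1/2) e^{-(1 - β²) v} dv`.
-/

open Real Set

lemma exp_neg_mul_sq_add_mul {b : ℝ} (hb : b ≠ 0) (c x : ℝ) :
    exp (-b * x ^ 2 + c * x) = exp (c ^ 2 / (4 * b)) * exp (-b * (x - c / (2 * b)) ^ 2) := by
  rw [← exp_add]
  congr 1
  field

lemma integrable_exp_neg_mul_sq_add_mul {b : ℝ} (hb : 0 < b) (c : ℝ) :
    Integrable fun x : ℝ ↦ exp (-b * x ^ 2 + c * x) := by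
  simp only [exp_neg_mul_sq_add_mul hb.ne' c]
  exact ((integrable_exp_neg_mul_sq hb).comp_sub_right _).const_mul _

lemma integral_exp_neg_mul_sq_add_mul {b : ℝ} (hb : 0 < b) (c : ℝ) :
    ∫ x : ℝ, exp (-b * x ^ 2 + c * x) = exp (c ^ 2 / (4 * b)) * √(π / b) := by
  simp only [exp_neg_mul_sq_add_mul hb.ne' c]
  rw [integral_const_mul, integral_sub_right_eq_self fun x ↦ exp (-b * x ^ 2), integral_gaussian]

lemma integrableOn_rpow_mul_exp_neg_mul_Ioi {a r : ℝ} (ha : 0 < a) (hr : 0 < r) :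
    IntegrableOn (fun t : ℝ ↦ t ^ (a - 1) * exp (-(r * t))) (Ioi 0) := by
  simpa using integrableOn_rpow_mul_exp_neg_mul_rpow (s := a - 1) (by linarith) one_pos hr

lemma integral_mul_exp_smul_comp_mul_exp {E : Type*} [NormedAddCommGroup E] [NormedSpace ℝ E]
    {c : ℝ} (hc : 0 < c) (f : ℝ → E) :
    ∫ t, (c * exp t) • f (c * exp t) = ∫ v in Ioi 0, f v := by
  have image_eq : (fun t ↦ c * exp t) '' univ = Ioi 0 := by
    rw [image_univ, ← Function.comp_def (c * ·), range_comp, range_exp,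
      image_mul_left_Ioi hc, mul_zero]
  have injective : Function.Injective fun t ↦ c * exp t :=
    (mul_right_injective₀ hc.ne').comp exp_injective
  rw [← image_eq, integral_image_eq_integral_abs_deriv_smul MeasurableSet.univ
    (fun t _ ↦ ((hasDerivAt_exp t).const_mul c).hasDerivWithinAt) injective.injOn, setIntegral_univ]
  simp only [abs_of_pos (mul_pos hc (exp_pos _))]

lemma one_add_sq_div_two_le_cosh (t : ℝ) : 1 + t ^ 2 / 2 ≤ cosh t := by
  have half_angle : cosh t = 1 + 2 * sinh (t / 2) ^ 2 := by
    rw [← mul_div_cancel₀ t two_ne_zero, cosh_two_mul, cosh_sq]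
    ring_nf
  have abs_le_abs_sinh : |t / 2| ≤ |sinh (t / 2)| := by
    rw [abs_sinh]
    exact self_le_sinh_iff.2 (abs_nonneg _)
  have := sq_le_sq.2 abs_le_abs_sinh
  linarith

lemma integrable_exp_neg_mul_cosh_mul_exp {x : ℝ} (hx : 0 < x) (ν : ℝ) :
    Integrable fun t ↦ exp (-(x * cosh t)) * exp (ν * t) := by
  refine (integrable_exp_neg_mul_sq_add_mul (half_pos hx) ν).mono' (by fun_prop) (.of_forall ?_)
  intro t
  rw [norm_of_nonneg (by positivity), ← exp_add]
  gcongr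
  linarith [mul_le_mul_of_nonneg_left (one_add_sq_div_two_le_cosh t) hx.le]

lemma integral_exp_neg_mul_cosh_mul_exp {x : ℝ} (hx : 0 < x) (ν : ℝ) :
    ∫ t, exp (-(x * cosh t)) * exp (ν * t) = 2 * besselK ν x := by
  set g : ℝ → ℝ := fun t ↦ exp (-(x * cosh t)) * exp (ν * t)
  have hg : Integrable g := integrable_exp_neg_mul_cosh_mul_exp hx ν
  have even_part (t : ℝ) :
      exp (-(x * cosh |t|)) * cosh (ν * |t|) = 2⁻¹ * (g t + g (-t)) := by
    have : cosh (ν * |t|) = cosh (ν * t) := by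
      rw [← cosh_abs, abs_mul, abs_abs, ← abs_mul, cosh_abs]
    simp only [g, this, cosh_abs, cosh_neg, mul_neg, cosh_eq (ν * t)]
    ring
  calc ∫ t, g t = 2⁻¹ * ((∫ t, g t) + ∫ t, g (-t)) := by rw [integral_neg_eq_self g]; ring
    _ = ∫ t, exp (-(x * cosh |t|)) * cosh (ν * |t|) := by
      simp only [even_part]
      rw [integral_const_mul, integral_add hg hg.comp_neg]
    _ = 2 * besselK ν x :=
      integral_comp_abs (f := fun t ↦ exp (-(x * cosh t)) * cosh (ν * t))

/-- The integrand of the representation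
`x ^ ν K_ν(x) = 2 ^ (ν - 1) ∫₀^∞ v ^ (ν - 1) e^{-v - x² / (4v)} dv`, meaningful for `v > 0`. It is a
Gaussian in `x`, of variance `2v`, with a weight depending on `v`. -/
noncomputable def besselKKernel (ν x v : ℝ) : ℝ :=
  v ^ (ν - 1) * exp (-v - x ^ 2 / (4 * v))

lemma half_mul_exp_mul_besselKKernel (ν t : ℝ) {x : ℝ} (hx : 0 < x) :
    x / 2 * exp t * besselKKernel ν x (x / 2 * exp t) =
      (x / 2) ^ ν * (exp (-(x * cosh t)) * exp (ν * t)) := by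
  have exponent_eq : -(x / 2 * exp t) - x ^ 2 / (4 * (x / 2 * exp t)) = -(x * cosh t) := by
    rw [cosh_eq, exp_neg]
    field
  rw [besselKKernel, exponent_eq, rpow_sub_one (by positivity),
    mul_rpow (by positivity) (by positivity), ← exp_mul, mul_comm t ν]
  field

lemma rpow_mul_besselK_eq_integral (ν : ℝ) {x : ℝ} (hx : 0 < x) :
    x ^ ν * besselK ν x = 2 ^ (ν - 1) * ∫ v in Ioi 0, besselKKernel ν x v := by
  rw [← integral_mul_exp_smul_comp_mul_exp (half_pos hx)]
  simp only [smul_eq_mul, half_mul_exp_mul_besselKKernel ν _ hx]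
  rw [integral_const_mul, integral_exp_neg_mul_cosh_mul_exp hx, rpow_sub_one two_ne_zero,
    div_rpow hx.le zero_le_two]
  field

lemma exp_mul_besselKKernel (ν β x v : ℝ) :
    exp (β * x) * besselKKernel ν x v =
      v ^ (ν - 1) * exp (-v) * exp (-(4 * v)⁻¹ * x ^ 2 + β * x) := by
  rw [besselKKernel, mul_left_comm, mul_assoc, ← exp_add, ← exp_add]
  ring_nf

lemma integrable_exp_mul_besselKKernel (ν β : ℝ) {v : ℝ} (hv : 0 < v) :
    Integrable fun x ↦ exp (β * x) * besselKKernel ν x v := by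
  simp only [exp_mul_besselKKernel]
  exact (integrable_exp_neg_mul_sq_add_mul (by positivity) β).const_mul _

lemma integral_exp_mul_besselKKernel (ν β : ℝ) {v : ℝ} (hv : 0 < v) :
    ∫ x, exp (β * x) * besselKKernel ν x v =
      2 * √π * (v ^ (ν + 1 / 2 - 1) * exp (-((1 - β ^ 2) * v))) := by
  have sqrt_eq : √(π / (4 * v)⁻¹) = 2 * √π * v ^ (1 / 2 : ℝ) := by
    rw [← sqrt_eq_rpow, show π / (4 * v)⁻¹ = 2 ^ 2 * π * v by field, sqrt_mul (by positivity),
      sqrt_mul (by positivity), sqrt_sq zero_le_two]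
  have exp_eq : exp (-((1 - β ^ 2) * v)) = exp (-v) * exp (β ^ 2 / (4 * (4 * v)⁻¹)) := by
    rw [← exp_add]
    congr 1
    field
  simp only [exp_mul_besselKKernel]
  rw [integral_const_mul, integral_exp_neg_mul_sq_add_mul (by positivity), sqrt_eq, exp_eq,
    add_sub_right_comm, rpow_add hv]
  ring

lemma integrable_uncurry_exp_mul_besselKKernel {ν β : ℝ} (hν : -(1 / 2) < ν) (hβ : 0 < 1 - β ^ 2) :
    Integrable (Function.uncurry fun x v ↦ exp (β * x) * besselKKernel ν x v)
      (volume.prod (volume.restrict (Ioi 0))) := by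
  have measurable : Measurable
      (Function.uncurry fun x v ↦ exp (β * x) * besselKKernel ν x v) := by
    unfold besselKKernel
    fun_prop
  refine (integrable_prod_iff' measurable.aestronglyMeasurable).2 ⟨?_, ?_⟩
  · filter_upwards [ae_restrict_mem measurableSet_Ioi] with v hv
    exact integrable_exp_mul_besselKKernel ν β hv
  · refine ((integrableOn_rpow_mul_exp_neg_mul_Ioi (a := ν + 1 / 2) (by linarith) hβ).const_mul
      (2 * √π)).congr ?_
    filter_upwards [ae_restrict_mem measurableSet_Ioi] with v (hv : 0 < v)
    have nonneg (x : ℝ) : 0 ≤ exp (β * x) * besselKKernel ν x v := by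
      unfold besselKKernel
      positivity
    simp only [Function.uncurry, norm_of_nonneg (nonneg _), integral_exp_mul_besselKKernel ν β hv]

/-- For `ν > −1/2` and `−1 < β < 1`,
`∫_{−∞}^{∞} e^{βx} |x|^ν K_ν(|x|) dx = √π Γ(ν + 1/2) 2^ν / (1 − β²)^{ν + 1/2}`. -/
theorem integral_exp_mul_abs_rpow_besselK
    (ν β : ℝ) (hν : -(1 / 2 : ℝ) < ν) (hβ : β ∈ Set.Ioo (-1 : ℝ) 1) :
    ∫ x : ℝ, Real.exp (β * x) * |x| ^ ν * besselK ν |x|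
      = Real.sqrt Real.pi * Real.Gamma (ν + 1 / 2) * 2 ^ ν / (1 - β ^ 2) ^ (ν + 1 / 2) := by
  have hβ' : 0 < 1 - β ^ 2 := sub_pos.2 ((sq_lt_one_iff_abs_lt_one β).2 (abs_lt.2 hβ))
  calc ∫ x : ℝ, exp (β * x) * |x| ^ ν * besselK ν |x|
      = ∫ x, 2 ^ (ν - 1) * ∫ v in Ioi 0, exp (β * x) * besselKKernel ν x v := by
        refine integral_congr_ae ?_
        filter_upwards [Measure.ae_ne volume (0 : ℝ)] with x hx
        rw [mul_assoc, rpow_mul_besselK_eq_integral ν (abs_pos.2 hx), integral_const_mul]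
        simp only [besselKKernel, sq_abs, mul_left_comm]
    _ = 2 ^ (ν - 1) * ∫ v in Ioi 0, ∫ x, exp (β * x) * besselKKernel ν x v := by
        rw [integral_const_mul,
          integral_integral_swap (integrable_uncurry_exp_mul_besselKKernel hν hβ')]
    _ = 2 ^ (ν - 1) * ∫ v in Ioi 0,
          2 * √π * (v ^ (ν + 1 / 2 - 1) * exp (-((1 - β ^ 2) * v))) := by
        rw [setIntegral_congr_fun measurableSet_Ioi fun v ↦ integral_exp_mul_besselKKernel ν β]
    _ = √π * Gamma (ν + 1 / 2) * 2 ^ ν / (1 - β ^ 2) ^ (ν + 1 / 2) := by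
        rw [integral_const_mul, integral_rpow_mul_exp_neg_mul_Ioi (by linarith) hβ',
          div_rpow zero_le_one hβ'.le, one_rpow, rpow_sub_one two_ne_zero]
        field
end

section
/- Let ρ ∈ (−1, 1), let X and V be independent standard normal random variables, set Y = ρX + √(1 − ρ²)V and Z = XY. Then the law of Z is absolutely continuous with respect to Lebesgue measure, with density p(x) = (1/(π √(1 − ρ²))) exp(ρx/(1 − ρ²)) K₀(|x|/(1 − ρ²)) for x ≠ 0, where K₀(y) = ∫₀^∞ e^{−y cosh t} dt. -/
open MeasureTheory ProbabilityTheory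

/-!
Given `X = x ≠ 0`, the variable `X (a X + b V)` is normal with mean `a x²` and variance `b² x²`, so
its law is the mixture of these normal laws over a standard normal `x`. Multiplying the two Gaussian
densities gives `e^{a z / b²} / (2π|b|) · |x|⁻¹ e^{-(p x² + q / x²)}` with
`p = (a² + b²) / (2b²)` and `q = z² / (2b²)`, and the substitution `x² = √(q / p) e^t` turns the
exponent into `-2√(p q) cosh t`, which is the integrand of `K₀`.
-/

open Set Function Real
open scoped ENNReal NNReal

lemma lintegral_eq_two_mul_setLIntegral_Ioi_of_even {μ : Measure ℝ} [μ.IsNegInvariant]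
    [NullSingletonClass μ] {f : ℝ → ℝ≥0∞} (hf : f.Even) :
    ∫⁻ x, f x ∂μ = 2 * ∫⁻ x in Ioi 0, f x ∂μ := by
  have h_neg : ∫⁻ x in Iio 0, f x ∂μ = ∫⁻ x in Ioi 0, f x ∂μ := by
    simpa [hf _] using (Measure.measurePreserving_neg μ).setLIntegral_comp_preimage_emb
      (MeasurableEquiv.neg ℝ).measurableEmbedding f (Ioi 0)
  rw [← lintegral_add_compl f measurableSet_Ioi, compl_Ioi, ← setLIntegral_congr Iio_ae_eq_Iic,
    h_neg, two_mul]

lemma range_const_mul_exp_const_mul {c k : ℝ} (hc : 0 < c) (hk : k ≠ 0) :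
    range (fun t ↦ c * exp (k * t)) = Ioi 0 := by
  refine Subset.antisymm (range_subset_iff.2 fun t ↦ by simp only [mem_Ioi]; positivity)
    fun x (hx : 0 < x) ↦ ⟨log (x / c) / k, ?_⟩
  simp only [mul_div_cancel₀ _ hk, exp_log (div_pos hx hc), mul_div_cancel₀ _ hc.ne']

lemma setLIntegral_Ioi_inv_mul_eq_lintegral_comp_exp {c k : ℝ} (hc : 0 < c) (hk : k ≠ 0)
    (f : ℝ → ℝ≥0∞) :
    ∫⁻ x in Ioi 0, ENNReal.ofReal x⁻¹ * f x =
      ENNReal.ofReal |k| * ∫⁻ t, f (c * exp (k * t)) := by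
  have h_deriv (t : ℝ) :
      HasDerivAt (fun t ↦ c * exp (k * t)) (k * (c * exp (k * t))) t := by
    refine (((hasDerivAt_id t).const_mul k).exp.const_mul c).congr_deriv ?_
    simp only [id_eq]
    ring
  have h_inj : Injective fun t ↦ c * exp (k * t) := fun s t hst ↦
    mul_left_cancel₀ hk (exp_injective (mul_left_cancel₀ hc.ne' hst))
  rw [← range_const_mul_exp_const_mul hc hk, ← image_univ,
    lintegral_image_eq_lintegral_abs_deriv_mul .univ (fun t _ ↦ (h_deriv t).hasDerivWithinAt)
      h_inj.injOn, setLIntegral_univ, ← lintegral_const_mul' _ _ ENNReal.ofReal_ne_top]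
  refine lintegral_congr fun t ↦ ?_
  have h_pos : 0 < c * exp (k * t) := by positivity
  rw [← mul_assoc, ← ENNReal.ofReal_mul (abs_nonneg _), abs_mul, abs_of_pos h_pos,
    mul_inv_cancel_right₀ h_pos.ne']

lemma integrableOn_exp_neg_mul_cosh_mul_cosh (ν : ℝ) {y : ℝ} (hy : 0 < y) :
    IntegrableOn (fun t ↦ exp (-(y * cosh t)) * cosh (ν * t)) (Ioi 0) := by
  refine ((exp_neg_integrableOn_Ioi 0 one_pos).const_mul
    (exp ((|ν| + 1) ^ 2 / y))).mono' (by fun_prop) ?_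
  filter_upwards [ae_restrict_mem measurableSet_Ioi] with t (ht : 0 < t)
  have h_sq_le : t ^ 2 / 4 ≤ cosh t := by
    rw [cosh_eq]
    linarith [quadratic_le_exp_of_nonneg ht.le, exp_pos (-t)]
  have h_cosh_le : cosh (ν * t) ≤ exp (|ν| * t) := by
    rw [← cosh_abs, abs_mul, abs_of_pos ht, cosh_eq]
    linarith [exp_le_exp.2 (neg_le_self (by positivity : 0 ≤ |ν| * t))]
  have h_exponent : -(y * cosh t) + |ν| * t ≤ (|ν| + 1) ^ 2 / y + -1 * t := by
    have h_nonneg : 0 ≤ y * (t / 2 - (|ν| + 1) / y) ^ 2 := by positivity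
    have h_expand : y * (t / 2 - (|ν| + 1) / y) ^ 2 =
        y * (t ^ 2 / 4) - (|ν| + 1) * t + (|ν| + 1) ^ 2 / y := by
      field_simp
      ring
    linarith [mul_le_mul_of_nonneg_left h_sq_le hy.le]
  calc ‖exp (-(y * cosh t)) * cosh (ν * t)‖
      = exp (-(y * cosh t)) * cosh (ν * t) := norm_of_nonneg (by positivity)
    _ ≤ exp (-(y * cosh t)) * exp (|ν| * t) := by gcongr
    _ = exp (-(y * cosh t) + |ν| * t) := (exp_add _ _).symm
    _ ≤ exp ((|ν| + 1) ^ 2 / y + -1 * t) := exp_le_exp.2 h_exponent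
    _ = exp ((|ν| + 1) ^ 2 / y) * exp (-1 * t) := exp_add _ _

lemma lintegral_exp_neg_mul_cosh_mul_cosh_eq_besselK (ν : ℝ) {y : ℝ} (hy : 0 < y) :
    ∫⁻ t, ENNReal.ofReal (exp (-(y * cosh t)) * cosh (ν * t)) =
      2 * ENNReal.ofReal (besselK ν y) := by
  rw [lintegral_eq_two_mul_setLIntegral_Ioi_of_even fun t ↦ by simp, besselK,
    ofReal_integral_eq_lintegral_ofReal (integrableOn_exp_neg_mul_cosh_mul_cosh ν hy)
      (ae_of_all _ fun t ↦ by positivity)]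

lemma setLIntegral_Ioi_inv_mul_exp_neg_sq_add_inv_sq_eq_besselK {p q : ℝ}
    (hp : 0 < p) (hq : 0 < q) :
    ∫⁻ x in Ioi 0, ENNReal.ofReal (x⁻¹ * exp (-(p * x ^ 2 + q / x ^ 2))) =
      ENNReal.ofReal (besselK 0 (2 * √(p * q))) := by
  set c : ℝ := √(√q / √p) with hc
  have hc_pos : 0 < c := by positivity
  have h_exponent (t : ℝ) :
      p * (c * exp (1 / 2 * t)) ^ 2 + q / (c * exp (1 / 2 * t)) ^ 2 =
        2 * √(p * q) * cosh t := by
    have h_sq : (c * exp (1 / 2 * t)) ^ 2 = √q / √p * exp t := by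
      rw [mul_pow, hc, sq_sqrt (by positivity), ← exp_nat_mul]
      ring_nf
    rw [h_sq, cosh_eq, exp_neg, sqrt_mul hp.le]
    nth_rewrite 1 [← sq_sqrt hp.le]
    nth_rewrite 2 [← sq_sqrt hq.le]
    field_simp
  calc ∫⁻ x in Ioi 0, ENNReal.ofReal (x⁻¹ * exp (-(p * x ^ 2 + q / x ^ 2)))
      = ∫⁻ x in Ioi 0, ENNReal.ofReal x⁻¹ *
          ENNReal.ofReal (exp (-(p * x ^ 2 + q / x ^ 2))) := by
        simp only [ENNReal.ofReal_mul' (exp_nonneg _)]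
    _ = ENNReal.ofReal |1 / 2| * ∫⁻ t, ENNReal.ofReal
          (exp (-(2 * √(p * q) * cosh t)) * cosh (0 * t)) := by
        rw [setLIntegral_Ioi_inv_mul_eq_lintegral_comp_exp hc_pos one_half_pos.ne'
          fun x ↦ ENNReal.ofReal (exp (-(p * x ^ 2 + q / x ^ 2)))]
        simp only [h_exponent, zero_mul, cosh_zero, mul_one]
    _ = ENNReal.ofReal (besselK 0 (2 * √(p * q))) := by
        rw [lintegral_exp_neg_mul_cosh_mul_cosh_eq_besselK 0 (by positivity), ← mul_assoc,
          ← ENNReal.ofReal_ofNat 2, ← ENNReal.ofReal_mul (abs_nonneg _)]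
        norm_num

lemma lintegral_inv_abs_mul_exp_neg_sq_add_inv_sq_eq_besselK {p q : ℝ} (hp : 0 < p) (hq : 0 < q) :
    ∫⁻ x, ENNReal.ofReal (|x|⁻¹ * exp (-(p * x ^ 2 + q / x ^ 2))) =
      2 * ENNReal.ofReal (besselK 0 (2 * √(p * q))) := by
  rw [lintegral_eq_two_mul_setLIntegral_Ioi_of_even fun x ↦ by simp,
    ← setLIntegral_Ioi_inv_mul_exp_neg_sq_add_inv_sq_eq_besselK hp hq]
  congr 1
  exact setLIntegral_congr_fun measurableSet_Ioi fun x (hx : 0 < x) ↦ by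
    simp only [abs_of_pos hx]

lemma map_prod_eq_withDensity_lintegral {α β γ : Type*} [MeasurableSpace α] [MeasurableSpace β]
    [MeasurableSpace γ] {μ : Measure α} [SFinite μ] {ν : Measure β} [SFinite ν] {κ : Measure γ}
    [SFinite κ] {φ : α × β → γ} (hφ : Measurable φ) {g : α → γ → ℝ≥0∞}
    (hg : Measurable (uncurry g))
    (h_density : ∀ᵐ x ∂μ, ν.map (fun y ↦ φ (x, y)) = κ.withDensity (g x)) :
    (μ.prod ν).map φ = κ.withDensity fun z ↦ ∫⁻ x, g x z ∂μ := by
  ext s hs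
  calc (μ.prod ν).map φ s = ∫⁻ x, ν.map (fun y ↦ φ (x, y)) s ∂μ := by
        rw [Measure.map_apply hφ hs, Measure.prod_apply (hφ hs)]
        refine lintegral_congr fun x ↦ ?_
        rw [Measure.map_apply (by fun_prop) hs]
        rfl
    _ = ∫⁻ x, ∫⁻ z in s, g x z ∂κ ∂μ :=
        lintegral_congr_ae (h_density.mono fun x hx ↦ by simp only [hx, withDensity_apply _ hs])
    _ = ∫⁻ z in s, ∫⁻ x, g x z ∂μ ∂κ := lintegral_lintegral_swap hg.aemeasurable
    _ = κ.withDensity (fun z ↦ ∫⁻ x, g x z ∂μ) s := (withDensity_apply _ hs).symm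

lemma gaussianReal_map_const_add_const_mul (m : ℝ) (v : ℝ≥0) (c d : ℝ) :
    (gaussianReal m v).map (fun x ↦ c + d * x) = gaussianReal (d * m + c) (‖d‖₊ ^ 2 * v) := by
  have h_var : NNReal.mk (d ^ 2) (sq_nonneg d) = ‖d‖₊ ^ 2 := by ext; simp
  rw [← gaussianReal_map_const_add c, ← h_var, ← gaussianReal_map_const_mul d,
    Measure.map_map (by fun_prop) (by fun_prop)]
  rfl

section

variable {a b : ℝ}

lemma gaussianPDFReal_mul_gaussianPDFReal_const_mul_sq (hb : b ≠ 0) {x : ℝ} (hx : x ≠ 0) (z : ℝ) :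
    gaussianPDFReal 0 1 x * gaussianPDFReal (a * x ^ 2) (‖b * x‖₊ ^ 2) z =
      (2 * π * |b|)⁻¹ * exp (a * z / b ^ 2) *
        (|x|⁻¹ *
          exp (-((a ^ 2 + b ^ 2) / (2 * b ^ 2) * x ^ 2 + z ^ 2 / (2 * b ^ 2) / x ^ 2))) := by
  have h_exponent : -(x - 0) ^ 2 / (2 * 1) + -(z - a * x ^ 2) ^ 2 / (2 * (b * x) ^ 2) =
      a * z / b ^ 2 +
        -((a ^ 2 + b ^ 2) / (2 * b ^ 2) * x ^ 2 + z ^ 2 / (2 * b ^ 2) / x ^ 2) := by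
    field_simp
    ring
  have h_sqrt : √(2 * π * 1) * √(2 * π * (b * x) ^ 2) = 2 * π * |b| * |x| := by
    rw [mul_one, sqrt_mul (by positivity) ((b * x) ^ 2), sqrt_sq_eq_abs, abs_mul, ← mul_assoc,
      mul_self_sqrt (by positivity), mul_assoc _ |b|]
  simp only [gaussianPDFReal, NNReal.coe_one, NNReal.coe_pow, coe_nnnorm, norm_eq_abs, sq_abs]
  rw [mul_mul_mul_comm, ← exp_add, ← mul_inv, h_sqrt, h_exponent, exp_add, mul_inv]
  ring

lemma map_gaussianReal_mul_add_eq_withDensity (hb : b ≠ 0) {x : ℝ} (hx : x ≠ 0) :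
    (gaussianReal 0 1).map (fun v ↦ x * (a * x + b * v)) =
      volume.withDensity (gaussianPDF (a * x ^ 2) (‖b * x‖₊ ^ 2)) := by
  have h_affine (v : ℝ) : x * (a * x + b * v) = a * x ^ 2 + b * x * v := by ring
  simp only [h_affine]
  rw [gaussianReal_map_const_add_const_mul, mul_zero, zero_add, mul_one,
    gaussianReal_of_var_ne_zero _ (by simp [hb, hx])]

lemma lintegral_gaussianPDF_const_mul_sq_eq_besselK (hb : b ≠ 0) {z : ℝ} (hz : z ≠ 0) :
    ∫⁻ x, gaussianPDF (a * x ^ 2) (‖b * x‖₊ ^ 2) z ∂gaussianReal 0 1 =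
      ENNReal.ofReal (1 / (π * |b|) * exp (a * z / b ^ 2) *
        besselK 0 (√(a ^ 2 + b ^ 2) * |z| / b ^ 2)) := by
  set p : ℝ := (a ^ 2 + b ^ 2) / (2 * b ^ 2) with hp
  set q : ℝ := z ^ 2 / (2 * b ^ 2) with hq
  set C : ℝ := (2 * π * |b|)⁻¹ * exp (a * z / b ^ 2) with hC
  have hC_nonneg : 0 ≤ C := by positivity
  have h_arg : 2 * √(p * q) = √(a ^ 2 + b ^ 2) * |z| / b ^ 2 := by
    have h_sq : p * q = (√(a ^ 2 + b ^ 2) * |z| / (2 * b ^ 2)) ^ 2 := by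
      rw [div_pow, mul_pow, sq_sqrt (by positivity), sq_abs, hp, hq]
      ring
    rw [h_sq, sqrt_sq (by positivity)]
    ring
  calc ∫⁻ x, gaussianPDF (a * x ^ 2) (‖b * x‖₊ ^ 2) z ∂gaussianReal 0 1
      = ∫⁻ x, gaussianPDF 0 1 x * gaussianPDF (a * x ^ 2) (‖b * x‖₊ ^ 2) z := by
        rw [gaussianReal_of_var_ne_zero 0 one_ne_zero]
        exact lintegral_withDensity_eq_lintegral_mul _ (measurable_gaussianPDF 0 1) (by fun_prop)
    _ = ∫⁻ x, ENNReal.ofReal C *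
          ENNReal.ofReal (|x|⁻¹ * exp (-(p * x ^ 2 + q / x ^ 2))) := by
        refine lintegral_congr_ae ?_
        filter_upwards [Measure.ae_ne volume 0] with x hx
        rw [gaussianPDF, gaussianPDF, ← ENNReal.ofReal_mul (gaussianPDFReal_nonneg _ _ _),
          ← ENNReal.ofReal_mul hC_nonneg, gaussianPDFReal_mul_gaussianPDFReal_const_mul_sq hb hx]
    _ = ENNReal.ofReal C *
          (2 * ENNReal.ofReal (besselK 0 (√(a ^ 2 + b ^ 2) * |z| / b ^ 2))) := by
        rw [lintegral_const_mul' _ _ ENNReal.ofReal_ne_top,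
          lintegral_inv_abs_mul_exp_neg_sq_add_inv_sq_eq_besselK (by positivity) (by positivity),
          h_arg]
    _ = ENNReal.ofReal (1 / (π * |b|) * exp (a * z / b ^ 2) *
          besselK 0 (√(a ^ 2 + b ^ 2) * |z| / b ^ 2)) := by
        rw [← mul_assoc, ← ENNReal.ofReal_ofNat 2, ← ENNReal.ofReal_mul hC_nonneg,
          ← ENNReal.ofReal_mul (by positivity), hC]
        congr 2
        field_simp

end

theorem product_normal_density_general {Ω : Type*} [MeasurableSpace Ω] {P : Measure Ω}
    {X V : Ω → ℝ} (hX : HasLaw X (gaussianReal 0 1) P) (hV : HasLaw V (gaussianReal 0 1) P)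
    (hindep : IndepFun X V P) (a : ℝ) {b : ℝ} (hb : b ≠ 0) :
    HasLaw (fun ω ↦ X ω * (a * X ω + b * V ω))
      (volume.withDensity fun z ↦ ENNReal.ofReal
        (1 / (π * |b|) * exp (a * z / b ^ 2) *
          besselK 0 (√(a ^ 2 + b ^ 2) * |z| / b ^ 2))) P := by
  have := hX.isProbabilityMeasure
  have h_meas : Measurable fun p : ℝ × ℝ ↦ p.1 * (a * p.1 + b * p.2) := by fun_prop
  refine HasLaw.comp ⟨h_meas.aemeasurable, ?_⟩ (hindep.hasLaw_prod hX hV)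
  have := nullSingletonClass_gaussianReal (μ := 0) (one_ne_zero (α := ℝ≥0))
  rw [map_prod_eq_withDensity_lintegral h_meas _
    ((Measure.ae_ne _ 0).mono fun x hx ↦ map_gaussianReal_mul_add_eq_withDensity hb hx)]
  · exact withDensity_congr_ae ((Measure.ae_ne volume 0).mono fun z hz ↦
      lintegral_gaussianPDF_const_mul_sq_eq_besselK hb hz)
  · fun_prop

/-- The product `Z = XY` of two zero mean, unit variance, correlation-`ρ` jointly normal
random variables (realised as `Z = XY` with `X, V` independent standard normals and
`Y = ρX + √(1 − ρ²)V`) has law absolutely continuous with respect to Lebesgue measure, with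
density `p(x) = (1/(π√(1 − ρ²))) e^{ρx/(1 − ρ²)} K₀(|x|/(1 − ρ²))`. -/
theorem product_normal_density
    {Ω : Type*} [MeasurableSpace Ω] (P : Measure Ω) [IsProbabilityMeasure P]
    (ρ : ℝ) (hρ : ρ ∈ Set.Ioo (-1 : ℝ) 1)
    (X V : Ω → ℝ) (hX : Measurable X) (hV : Measurable V)
    (hXlaw : P.map X = gaussianReal 0 1) (hVlaw : P.map V = gaussianReal 0 1)
    (hindep : IndepFun X V P)
    (Y Z : Ω → ℝ)
    (hY : ∀ ω, Y ω = ρ * X ω + Real.sqrt (1 - ρ ^ 2) * V ω)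
    (hZ : ∀ ω, Z ω = X ω * Y ω) :
    P.map Z = volume.withDensity (fun x => ENNReal.ofReal
      (1 / (Real.pi * Real.sqrt (1 - ρ ^ 2)) * Real.exp (ρ * x / (1 - ρ ^ 2)) *
        besselK 0 (|x| / (1 - ρ ^ 2)))) := by
  have h_pos : 0 < 1 - ρ ^ 2 := by nlinarith [hρ.1, hρ.2]
  have h_law := product_normal_density_general ⟨hX.aemeasurable, hXlaw⟩ ⟨hV.aemeasurable, hVlaw⟩
    hindep ρ (Real.sqrt_pos.2 h_pos).ne'
  simpa [← hY, ← hZ, Real.sq_sqrt h_pos.le, abs_of_nonneg] using h_law.map_eq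
end
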